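/- arXiv:1512.00984 — 9 statements merged into one kernel-verified Lean document; each statement's English description precedes it below -/
import Mathlib

section
/- Let F : ℝ^(m×n) × ℝ^(m×n) → ℝ, let B ∈ ℝ satisfy F(X,Y) ≥ B for all X, Y, let c₁ > 0, and let (X^t)_{t≥1}, (Y^t)_{t≥1} be sequences of m×n real matrices satisfying, for every t ≥ 1, F(X^{t+1}, Y^t) ≤ F(X^t, Y^t) − c₁‖X^{t+1} − X^t‖_F² and F(X^{t+1}, Y^{t+1}) ≤ F(X^{t+1}, Y^t) − c₁‖Y^{t+1} − Y^t‖_F². Then for every T ≥ 1, min_{t = 1,…,T} (‖X^{t+1} − X^t‖_F² + ‖Y^{t+1} − Y^t‖_F²) ≤ (F(X^1, Y^1) − B) / (c₁ T). -/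
/-!
One full alternating step decreases `F` by at least `c₁` times the sum of the two squared
displacements. Telescoping bounds `c₁` times the total of these over `t = 1, …, T` by
`F(X¹, Y¹) - F(X^{T+1}, Y^{T+1}) ≤ F(X¹, Y¹) - B`, and the minimum is at most the average.
-/

/-- Squared Frobenius norm of a real matrix. -/
def frobSq {m n : ℕ} (A : Matrix (Fin m) (Fin n) ℝ) : ℝ :=
  ∑ i, ∑ j, (A i j) ^ 2

/-- For `F ≥ B` of two matrix variables satisfying the alternating sufficient-decrease
conditions, `min_{t=1,…,T} (‖X^{t+1}-X^t‖_F² + ‖Y^{t+1}-Y^t‖_F²) ≤ (F(X¹,Y¹) - B)/(c₁ T)`. -/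
theorem alternating_sufficient_decrease_rate {m n : ℕ}
    (F : Matrix (Fin m) (Fin n) ℝ → Matrix (Fin m) (Fin n) ℝ → ℝ) (B : ℝ)
    (hB : ∀ X Y, B ≤ F X Y)
    (c₁ : ℝ) (hc₁ : 0 < c₁)
    (X Y : ℕ → Matrix (Fin m) (Fin n) ℝ)
    (hdecX : ∀ t : ℕ, 1 ≤ t →
      F (X (t + 1)) (Y t) ≤ F (X t) (Y t) - c₁ * frobSq (X (t + 1) - X t))
    (hdecY : ∀ t : ℕ, 1 ≤ t →
      F (X (t + 1)) (Y (t + 1)) ≤ F (X (t + 1)) (Y t) - c₁ * frobSq (Y (t + 1) - Y t))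
    (T : ℕ) (hT : 1 ≤ T) :
    (Finset.Icc 1 T).inf' (Finset.nonempty_Icc.mpr hT)
      (fun t => frobSq (X (t + 1) - X t) + frobSq (Y (t + 1) - Y t))
      ≤ (F (X 1) (Y 1) - B) / (c₁ * T) := by
  -- Adding the two decrease conditions and telescoping over `t = 1, …, k`.
  have htel : ∀ k : ℕ, c₁ * ∑ t ∈ Finset.Icc 1 k,
      (frobSq (X (t + 1) - X t) + frobSq (Y (t + 1) - Y t))
      ≤ F (X 1) (Y 1) - F (X (k + 1)) (Y (k + 1)) := by
    intro k
    induction k with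
    | zero => simp
    | succ k ih =>
      rw [Finset.sum_Icc_succ_top (by omega)]
      have h1 := hdecX (k + 1) (by omega)
      have h2 := hdecY (k + 1) (by omega)
      linarith
  have hTpos : (0 : ℝ) < T := by exact_mod_cast hT
  rw [le_div_iff₀ (mul_pos hc₁ hTpos)]
  set μ := (Finset.Icc 1 T).inf' (Finset.nonempty_Icc.mpr hT)
      (fun t => frobSq (X (t + 1) - X t) + frobSq (Y (t + 1) - Y t))
  -- The sum of `T` terms is at least `T` times their minimum.
  have hsum : (T : ℝ) * μ ≤ ∑ t ∈ Finset.Icc 1 T,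
      (frobSq (X (t + 1) - X t) + frobSq (Y (t + 1) - Y t)) := by
    have h := Finset.card_nsmul_le_sum (Finset.Icc 1 T)
      (fun t => frobSq (X (t + 1) - X t) + frobSq (Y (t + 1) - Y t)) μ
      (fun t ht => Finset.inf'_le _ ht)
    simpa using h
  have h1 := mul_le_mul_of_nonneg_left hsum hc₁.le
  have h2 := htel T
  have h3 := hB (X (T + 1)) (Y (T + 1))
  linarith
end

section
/- Let m ≤ n, and let Z ∈ ℝ^(m×n) admit a singular value decomposition Z = U Σ Vᵀ, where U ∈ ℝ^(m×m) and V ∈ ℝ^(n×n) are orthogonal and Σ ∈ ℝ^(m×n) has diagonal entries σ_1 ≥ … ≥ σ_m ≥ 0 and zeros off the diagonal. Let d_1 ≥ d_2 ≥ … ≥ d_m ≥ 0 be nonincreasing nonnegative reals. Then for all orthogonal matrices P ∈ ℝ^(m×m) and Q ∈ ℝ^(n×n), one has ∑_{i=1}^m d_i (Pᵀ Z Q)_{ii} ≤ ∑_{i=1}^m d_i σ_i, and equality holds for P = U and Q = V; hence the maximum of ∑_{i=1}^m d_i (Pᵀ Z Q)_{ii} over orthogonal P, Q equals ∑_{i=1}^m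 d_i σ_i. -/
open Matrix

/-!
With `A = Uᵀ P` and `B = Vᵀ Q`, both orthogonal, `(Pᵀ Z Q)_{ii} = ∑ k, σ k * A k i * B k i`. By
`2 x y ≤ x² + y²`, the weighted sum is at most `∑ i k, d i * σ k * M i k` with
`M i k = ((A k i)² + (B k i)²) / 2`, and the row and column sums of the nonnegative matrix `M` are
at most `1`. So it suffices to bound the value of an assignment problem over doubly substochastic
matrices, which is done by linear programming duality: `exists_potentials` gives an explicit dual
feasible point `(u, v)` whose value is `∑ i, d i * σ i`.
-/

/-- Optimal dual variables for the assignment problem with payoff `a i * b k`, for `a` and `b`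
nonincreasing. Every entry of the payoff is dominated by `u i + v k`, with equality on the
diagonal, so that the identity assignment is optimal. -/
lemma exists_potentials (m : ℕ) (a b : ℕ → ℝ) (ha : Antitone a) (hb : Antitone b)
    (ha0 : ∀ i, 0 ≤ a i) (hb0 : ∀ i, 0 ≤ b i) (ham : a m = 0) :
    ∃ u v : ℕ → ℝ, (∀ i, 0 ≤ u i) ∧ (∀ i, 0 ≤ v i) ∧ (∀ i < m, u i + v i = a i * b i) ∧
      ∀ i < m, ∀ k < m, a i * b k ≤ u i + v k := by
  -- The summands of `u` and `v` at `j` add up to `a j * b j - a (j + 1) * b (j + 1)`.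
  let u : ℕ → ℝ := fun i => ∑ j ∈ Finset.Ico i m, (a j - a (j + 1)) * b j
  let v : ℕ → ℝ := fun i => ∑ j ∈ Finset.Ico i m, (b j - b (j + 1)) * a (j + 1)
  have hu (i : ℕ) (hi : i < m) : u i = (a i - a (i + 1)) * b i + u (i + 1) :=
    Finset.sum_eq_sum_Ico_succ_bot hi _
  have hv (i : ℕ) (hi : i < m) : v i = (b i - b (i + 1)) * a (i + 1) + v (i + 1) :=
    Finset.sum_eq_sum_Ico_succ_bot hi _
  have hdiag : ∀ i ≤ m, u i + v i = a i * b i := by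
    intro i hi
    induction hi using Nat.decreasingInduction with
    | self => simp [u, v, ham]
    | of_succ i hi ih => rw [hu i hi, hv i hi]; linear_combination ih
  have hu' (i k : ℕ) (hik : i ≤ k) : k ≤ m → u k + (a i - a k) * b k ≤ u i := by
    induction k, hik using Nat.le_induction with
    | base => simp
    | succ k hk ih =>
      intro hkm
      have h1 := ih (by omega)
      rw [hu k hkm] at h1
      nlinarith [mul_nonneg (sub_nonneg.2 (ha (show i ≤ k + 1 by omega)))
        (sub_nonneg.2 (hb (Nat.le_succ k)))]
  have hv' (i k : ℕ) (hik : i ≤ k) : k ≤ m → v k + (b i - b k) * a k ≤ v i := by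
    induction k, hik using Nat.le_induction with
    | base => simp
    | succ k hk ih =>
      intro hkm
      have h1 := ih (by omega)
      rw [hv k hkm] at h1
      nlinarith [mul_nonneg (sub_nonneg.2 (hb hk)) (sub_nonneg.2 (ha (Nat.le_succ k)))]
  refine ⟨u, v, fun i => ?_, fun i => ?_, fun i hi => hdiag i hi.le, fun i hi k hk => ?_⟩
  · exact Finset.sum_nonneg fun j _ => mul_nonneg (sub_nonneg.2 (ha (Nat.le_succ j))) (hb0 j)
  · exact Finset.sum_nonneg fun j _ => mul_nonneg (sub_nonneg.2 (hb (Nat.le_succ j))) (ha0 _)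
  · rcases le_total i k with h | h
    · linarith [hu' i k h hk.le, hdiag k hk.le]
    · linarith [hv' k i h hi.le, hdiag i hi.le]

/-- The payoff of a doubly substochastic matrix is at most that of the identity. -/
lemma sum_mul_substochastic_le {m : ℕ} (a b : ℕ → ℝ)
    (ha : ∀ i j : ℕ, i ≤ j → j < m → a j ≤ a i) (ha0 : ∀ i : ℕ, i < m → 0 ≤ a i)
    (hb : ∀ i j : ℕ, i ≤ j → j < m → b j ≤ b i) (hb0 : ∀ i : ℕ, i < m → 0 ≤ b i)
    (M : Matrix (Fin m) (Fin m) ℝ) (hM : ∀ i k, 0 ≤ M i k)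
    (hrow : ∀ i, ∑ k, M i k ≤ 1) (hcol : ∀ k, ∑ i, M i k ≤ 1) :
    ∑ i : Fin m, ∑ k : Fin m, a i * b k * M i k ≤ ∑ i : Fin m, a i * b i := by
  -- Truncation by `0` beyond `m` makes both sequences antitone and nonnegative on all of `ℕ`.
  have trunc (c : ℕ → ℝ) (hc : ∀ i j : ℕ, i ≤ j → j < m → c j ≤ c i)
      (hc0 : ∀ i : ℕ, i < m → 0 ≤ c i) :
      Antitone (fun i => if i < m then c i else 0) ∧ ∀ i, 0 ≤ if i < m then c i else 0 := by
    have h0 : ∀ i, 0 ≤ if i < m then c i else 0 := by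
      intro i
      split_ifs with h
      exacts [hc0 i h, le_rfl]
    refine ⟨fun i j hij => ?_, h0⟩
    by_cases hj : j < m
    · simpa [hj, hij.trans_lt hj] using hc i j hij hj
    · simpa [hj] using h0 i
  obtain ⟨u, v, hu, hv, hdiag, hle⟩ := exists_potentials m _ _ (trunc a ha ha0).1
    (trunc b hb hb0).1 (trunc a ha ha0).2 (trunc b hb hb0).2 (by simp)
  calc ∑ i : Fin m, ∑ k : Fin m, a i * b k * M i k
      ≤ ∑ i : Fin m, ∑ k : Fin m, (u i + v k) * M i k := by
        gcongr with i _ k _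
        · exact hM i k
        · simpa using hle i i.2 k k.2
    _ = ∑ i : Fin m, u i * ∑ k, M i k + ∑ k : Fin m, v k * ∑ i, M i k := by
        simp only [add_mul, Finset.sum_add_distrib, Finset.mul_sum]
        rw [Finset.sum_comm (f := fun i k : Fin m => v k * M i k)]
    _ ≤ ∑ i : Fin m, u i * 1 + ∑ k : Fin m, v k * 1 := by
        gcongr with i _ k _
        exacts [hu i, hrow i, hv k, hcol k]
    _ = ∑ i : Fin m, a i * b i := by
        rw [← Finset.sum_add_distrib]
        refine Finset.sum_congr rfl fun i _ => ?_
        simpa using hdiag i i.2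

lemma sum_sq_row_le_one {m n : ℕ} (W : Matrix (Fin n) (Fin n) ℝ) (hW : W * Wᵀ = 1)
    (f : Fin m → Fin n) (hf : Function.Injective f) (j : Fin n) :
    ∑ k, W j (f k) ^ 2 ≤ 1 := by
  have h : ∑ k, W j k ^ 2 = 1 := by
    simpa [Matrix.mul_apply, sq] using congrFun (congrFun hW j) j
  rw [← h, ← Finset.sum_image (f := fun k => W j k ^ 2) (s := Finset.univ) (g := f) hf.injOn]
  exact Finset.sum_le_sum_of_subset_of_nonneg (Finset.subset_univ _) fun _ _ _ => sq_nonneg _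

lemma orthogonal_transpose_mul {n : ℕ} {X Y : Matrix (Fin n) (Fin n) ℝ}
    (hX : Xᵀ * X = 1) (hY : Yᵀ * Y = 1) : (Xᵀ * Y)ᵀ * (Xᵀ * Y) = 1 := by
  rw [transpose_mul, transpose_transpose, Matrix.mul_assoc, ← Matrix.mul_assoc X,
    mul_eq_one_comm.1 hX, Matrix.one_mul, hY]

/-- Von Neumann-type trace inequality: for `Z = U Σ Vᵀ` with nonincreasing nonnegative
singular values `σ` and nonincreasing nonnegative weights `d`, for all orthogonal `P`, `Q` one
has `∑ i, d i * (Pᵀ Z Q)_{ii} ≤ ∑ i, d i * σ i`, with equality for `P = U`, `Q = V`. -/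
theorem weighted_diagonal_max {m n : ℕ} (hmn : m ≤ n)
    (Z : Matrix (Fin m) (Fin n) ℝ)
    (U : Matrix (Fin m) (Fin m) ℝ) (hU : Uᵀ * U = 1)
    (V : Matrix (Fin n) (Fin n) ℝ) (hV : Vᵀ * V = 1)
    (S : Matrix (Fin m) (Fin n) ℝ) (σ : ℕ → ℝ)
    (hS : ∀ (i : Fin m) (j : Fin n), S i j = if (i : ℕ) = (j : ℕ) then σ (i : ℕ) else 0)
    (hσmono : ∀ i j : ℕ, i ≤ j → j < m → σ j ≤ σ i)
    (hσnonneg : ∀ i : ℕ, i < m → 0 ≤ σ i)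
    (hZ : Z = U * S * Vᵀ)
    (d : ℕ → ℝ)
    (hdmono : ∀ i j : ℕ, i ≤ j → j < m → d j ≤ d i)
    (hdnonneg : ∀ i : ℕ, i < m → 0 ≤ d i) :
    (∀ (P : Matrix (Fin m) (Fin m) ℝ) (Q : Matrix (Fin n) (Fin n) ℝ),
        Pᵀ * P = 1 → Qᵀ * Q = 1 →
        ∑ i : Fin m, d (i : ℕ) * (Pᵀ * Z * Q) i (Fin.castLE hmn i)
          ≤ ∑ i : Fin m, d (i : ℕ) * σ (i : ℕ)) ∧
    ∑ i : Fin m, d (i : ℕ) * (Uᵀ * Z * V) i (Fin.castLE hmn i)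
      = ∑ i : Fin m, d (i : ℕ) * σ (i : ℕ) := by
  have hinj : Function.Injective (Fin.castLE hmn) := Fin.castLE_injective hmn
  refine ⟨fun P Q hP hQ => ?_, ?_⟩
  · obtain ⟨A, hA⟩ : ∃ A, A = Uᵀ * P := ⟨_, rfl⟩
    obtain ⟨B, hB⟩ : ∃ B, B = Vᵀ * Q := ⟨_, rfl⟩
    have hA1 : Aᵀ * A = 1 := hA ▸ orthogonal_transpose_mul hU hP
    have hB1 : Bᵀ * B = 1 := hB ▸ orthogonal_transpose_mul hV hQ
    have hprod : Pᵀ * Z * Q = Aᵀ * (S * B) := by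
      simp only [hZ, hA, hB, transpose_mul, transpose_transpose, Matrix.mul_assoc]
    have hSB (k : Fin m) (j : Fin n) : (S * B) k j = σ k * B (Fin.castLE hmn k) j := by
      rw [Matrix.mul_apply, Finset.sum_eq_single (Fin.castLE hmn k)]
      · simp [hS]
      · intro l _ hl
        have : (k : ℕ) ≠ l := fun h => hl (Fin.ext h.symm)
        simp [hS, this]
      · simp
    let M : Matrix (Fin m) (Fin m) ℝ := fun i k =>
      (A k i ^ 2 + B (Fin.castLE hmn k) (Fin.castLE hmn i) ^ 2) / 2
    calc ∑ i : Fin m, d i * (Pᵀ * Z * Q) i (Fin.castLE hmn i)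
        ≤ ∑ i : Fin m, ∑ k : Fin m, d i * σ k * M i k := by
          refine Finset.sum_le_sum fun i _ => ?_
          rw [hprod, Matrix.mul_apply, Finset.mul_sum]
          refine Finset.sum_le_sum fun k _ => ?_
          have h := two_mul_le_add_sq (A k i) (B (Fin.castLE hmn k) (Fin.castLE hmn i))
          have h' : A k i * B (Fin.castLE hmn k) (Fin.castLE hmn i) ≤ M i k := by
            simp only [M]; linarith
          have := mul_le_mul_of_nonneg_left h' (mul_nonneg (hdnonneg i i.2) (hσnonneg k k.2))
          rw [hSB, transpose_apply]
          linarith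
      _ ≤ ∑ i : Fin m, d i * σ i := by
          refine sum_mul_substochastic_le d σ hdmono hdnonneg hσmono hσnonneg M
            (fun i k => by simp only [M]; positivity) (fun i => ?_) (fun k => ?_)
          · have h1 := sum_sq_row_le_one Aᵀ hA1 id Function.injective_id i
            have h2 := sum_sq_row_le_one Bᵀ hB1 _ hinj (Fin.castLE hmn i)
            simp only [transpose_apply, id] at h1 h2
            simp only [M, ← Finset.sum_div, Finset.sum_add_distrib]
            linarith
          · have h1 := sum_sq_row_le_one A (mul_eq_one_comm.1 hA1) id Function.injective_id k
            have h2 := sum_sq_row_le_one B (mul_eq_one_comm.1 hB1) _ hinj (Fin.castLE hmn k)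
            simp only [id] at h1
            simp only [M, ← Finset.sum_div, Finset.sum_add_distrib]
            linarith
  · have h : Uᵀ * Z * V = S := by
      rw [hZ, Matrix.mul_assoc, Matrix.mul_assoc (U * S), hV, Matrix.mul_one, ← Matrix.mul_assoc,
        hU, Matrix.one_mul]
    simp [h, hS]
end

section
/- Let r̂ : [0,∞) → [0,∞) be concave on [0,∞), non-decreasing, with r̂(0) = 0, and not identically zero (there exists δ > 0 with r̂(δ) > 0). Let μ > 0. Then there exists a threshold γ > 0 such that for every σ with 0 ≤ σ ≤ γ, the point y = 0 is a global minimizer of the scalar proximal objective h_σ(y) = ½(y − σ)² + μ r̂(y) over y ≥ 0, i.e., h_σ(0) ≤ h_σ(y) for all y ≥ 0. -/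
/-!
Expanding the square and using `r 0 = 0`, the inequality `h_σ(0) ≤ h_σ(y)` is equivalent to
`y σ ≤ y² / 2 + μ r(y)`. Choose `δ > 0` with `r δ > 0` and let `γ = min (δ / 2) (μ r(δ) / δ)`.

* If `0 ≤ y ≤ δ`, concavity puts `r` above its chord from `0` to `δ`, so
  `μ r(y) ≥ y (μ r(δ) / δ) ≥ y σ`, and the penalty alone suffices.
* If `y ≥ δ`, then `σ ≤ δ / 2 ≤ y / 2`, so the quadratic term alone suffices.
-/

/-- For any concave, non-decreasing penalty `r̂` on `[0,∞)` with `r̂(0) = 0` that is not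
identically zero, and any `μ > 0`, there is a threshold `γ > 0` such that whenever
`0 ≤ σ ≤ γ`, the point `y = 0` globally minimizes `h_σ(y) = ½(y-σ)² + μ r̂(y)` over `y ≥ 0`. -/
theorem exists_threshold_of_concave_penalty
    (r : ℝ → ℝ)
    (hconc : ConcaveOn ℝ (Set.Ici (0 : ℝ)) r)
    (hmono : MonotoneOn r (Set.Ici (0 : ℝ)))
    (hr0 : r 0 = 0)
    (hrnonneg : ∀ y : ℝ, 0 ≤ y → 0 ≤ r y)
    (hnontriv : ∃ δ : ℝ, 0 < δ ∧ 0 < r δ)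
    (μ : ℝ) (hμ : 0 < μ) :
    ∃ γ : ℝ, 0 < γ ∧ ∀ σ : ℝ, 0 ≤ σ → σ ≤ γ →
      ∀ y : ℝ, 0 ≤ y →
        (1 / 2) * (0 - σ) ^ 2 + μ * r 0 ≤ (1 / 2) * (y - σ) ^ 2 + μ * r y := by
  obtain ⟨δ, hδ, hrδ⟩ := hnontriv
  refine ⟨min (δ / 2) (μ * r δ / δ), lt_min (by positivity) (by positivity), ?_⟩
  intro σ _ hσγ y hy
  have hσ_half : σ ≤ δ / 2 := hσγ.trans (min_le_left _ _)
  have hσ_slope : σ ≤ μ * r δ / δ := hσγ.trans (min_le_right _ _)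
  suffices h : y * σ ≤ (1 / 2) * y ^ 2 + μ * r y by
    rw [hr0]
    linarith [show (1 / 2) * (y - σ) ^ 2 = (1 / 2) * y ^ 2 - y * σ + (1 / 2) * (0 - σ) ^ 2 by ring]
  rcases le_total y δ with hyδ | hδy
  · have hchord : y / δ * r δ ≤ r y := by
      -- `y` is the convex combination of `0` and `δ` with weight `y / δ` on `δ`.
      have h := hconc.2 (Set.mem_Ici.2 le_rfl) (Set.mem_Ici.2 hδ.le)
        (sub_nonneg.2 ((div_le_one hδ).2 hyδ)) (div_nonneg hy hδ.le)
        (sub_add_cancel 1 (y / δ))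
      simpa [hr0, div_mul_cancel₀ y hδ.ne'] using h
    calc y * σ ≤ y * (μ * r δ / δ) := mul_le_mul_of_nonneg_left hσ_slope hy
      _ = μ * (y / δ * r δ) := by ring
      _ ≤ μ * r y := mul_le_mul_of_nonneg_left hchord hμ.le
      _ ≤ (1 / 2) * y ^ 2 + μ * r y := le_add_of_nonneg_left (by positivity)
  · have hμr : 0 ≤ μ * r y := mul_nonneg hμ.le (hrnonneg y hy)
    have hyσ : y * σ ≤ y * (y / 2) := mul_le_mul_of_nonneg_left (by linarith) hy
    linarith [show y * (y / 2) = (1 / 2) * y ^ 2 by ring]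
end

section
/- (Capped-ℓ₁ proximal solution, middle regime.) Let θ > 0, μ > 0 and let σ satisfy μ < σ ≤ θ + μ/2. Then y = σ − μ is a global minimizer of h_σ(y) = ½(y − σ)² + μ min(y, θ) over y ≥ 0, i.e., h_σ(σ − μ) ≤ h_σ(y) for all y ≥ 0. -/
/-- Capped-ℓ₁ proximal solution, middle regime: if `μ < σ ≤ θ + μ/2` then `y = σ - μ` globally
minimizes `h_σ(y) = ½(y-σ)² + μ min(y, θ)` over `y ≥ 0`. -/
theorem cappedL1_prox_middle (θ μ σ : ℝ) (hθ : 0 < θ) (hμ : 0 < μ)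
    (hσl : μ < σ) (hσu : σ ≤ θ + μ / 2) :
    ∀ y : ℝ, 0 ≤ y →
      (1 / 2) * ((σ - μ) - σ) ^ 2 + μ * min (σ - μ) θ
        ≤ (1 / 2) * (y - σ) ^ 2 + μ * min y θ := by
  intro y _
  -- The candidate lies on the linear piece of the penalty, so its value is `μσ - μ²/2`.
  rw [min_eq_left (by linarith : σ - μ ≤ θ)]
  rcases le_total y θ with h | h
  · -- On the linear piece the gap is the completed square `½(y - (σ - μ))²`.
    rw [min_eq_left h]
    nlinarith [sq_nonneg (y - σ + μ)]
  · -- On the flat piece `h_σ(y) ≥ μθ`, and `μθ ≥ μ(σ - μ/2)` is the upper bound on `σ`.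
    rw [min_eq_right h]
    nlinarith [sq_nonneg (y - σ), mul_le_mul_of_nonneg_left hσu hμ.le]
end

section
/- (Capped-ℓ₁ proximal solution, large-σ regime.) Let θ > 0, μ > 0 and let σ satisfy σ > θ + μ/2. Then y = σ is a global minimizer of h_σ(y) = ½(y − σ)² + μ min(y, θ) over y ≥ 0, with minimum value μθ; i.e., h_σ(σ) = μθ ≤ h_σ(y) for all y ≥ 0. -/
/-- Capped-ℓ₁ proximal solution, large-σ regime: if `σ > θ + μ/2` then `y = σ` globally
minimizes `h_σ(y) = ½(y-σ)² + μ min(y, θ)` over `y ≥ 0`, with minimum value `μθ`. -/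
theorem cappedL1_prox_large (θ μ σ : ℝ) (hθ : 0 < θ) (hμ : 0 < μ)
    (hσ : θ + μ / 2 < σ) :
    (1 / 2) * (σ - σ) ^ 2 + μ * min σ θ = μ * θ ∧
    ∀ y : ℝ, 0 ≤ y → μ * θ ≤ (1 / 2) * (y - σ) ^ 2 + μ * min y θ := by
  refine ⟨?_, fun y _ => ?_⟩
  · rw [min_eq_right (by linarith)]
    ring
  · rcases le_total θ y with h | h
    · rw [min_eq_right h]
      nlinarith [sq_nonneg (y - σ)]
    · rw [min_eq_left h]
      -- With `d = θ - y ≥ 0` one has `σ - y ≥ d + μ/2 ≥ 0`, and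
      -- `(d + μ/2)² = 2μd + (d - μ/2)² ≥ 2μd`.
      have hsq : (θ - y + μ / 2) ^ 2 ≤ (σ - y) ^ 2 :=
        pow_le_pow_left₀ (by linarith) (by linarith) 2
      nlinarith [sq_nonneg (θ - y - μ / 2)]
end

section
/- (LSP threshold.) Let θ > 0, μ > 0, and let the log-sum penalty be r̂(y) = log(1 + y/θ). If 0 ≤ σ ≤ min(μ/θ, θ), then y = 0 is a global minimizer of h_σ(y) = ½(y − σ)² + μ log(1 + y/θ) over y ≥ 0, i.e., h_σ(0) ≤ h_σ(y) for all y ≥ 0. -/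
/-! With `t = y / θ`, the hypotheses give `σ * θ ≤ μ` and `σ * θ ≤ θ ^ 2`, so
`h_σ(y) - h_σ(0) = θ ^ 2 * t ^ 2 / 2 - σ * θ * t + μ * log (1 + t)` is at least
`σ * θ * (t ^ 2 / 2 - t + log (1 + t))`, and the bracket is nonnegative because
`log (1 + t) ≥ 2 * t / (t + 2) ≥ t - t ^ 2 / 2` for `t ≥ 0`. -/

theorem log_one_add_ge_sub_sq (t : ℝ) (ht : 0 ≤ t) :
    t - t ^ 2 / 2 ≤ Real.log (1 + t) := by
  refine le_trans ?_ (Real.le_log_one_add_of_nonneg ht)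
  rw [le_div_iff₀ (by linarith)]
  nlinarith [pow_nonneg ht 3]

/-- LSP threshold: if `0 ≤ σ ≤ min(μ/θ, θ)` then `y = 0` globally minimizes
`h_σ(y) = ½(y-σ)² + μ log(1 + y/θ)` over `y ≥ 0`. -/
theorem lsp_threshold (θ μ σ : ℝ) (hθ : 0 < θ) (hμ : 0 < μ)
    (hσ0 : 0 ≤ σ) (hσ : σ ≤ min (μ / θ) θ) :
    ∀ y : ℝ, 0 ≤ y →
      (1 / 2) * (0 - σ) ^ 2 + μ * Real.log (1 + 0 / θ)
        ≤ (1 / 2) * (y - σ) ^ 2 + μ * Real.log (1 + y / θ) := by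
  intro y hy
  obtain ⟨h1, h2⟩ := le_min_iff.mp hσ
  rw [le_div_iff₀ hθ] at h1
  obtain ⟨t, rfl⟩ : ∃ t, y = θ * t := ⟨y / θ, by field_simp⟩
  have ht : 0 ≤ t := nonneg_of_mul_nonneg_right hy hθ
  rw [mul_div_cancel_left₀ t hθ.ne', zero_div, add_zero, Real.log_one]
  have hlog : 0 ≤ Real.log (1 + t) := Real.log_nonneg (by linarith)
  have ha := mul_le_mul_of_nonneg_right h1 hlog
  have hb := mul_le_mul_of_nonneg_left (log_one_add_ge_sub_sq t ht) (mul_nonneg hσ0 hθ.le)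
  have hc := mul_le_mul_of_nonneg_right h2 (mul_nonneg hθ.le (sq_nonneg t))
  linarith
end

section
/- (LSP proximal solution.) Let σ > 0, θ > 0, μ > 0 with (σ + θ)² > 4μ, and set ŷ₂ = ½(σ − θ + √((σ + θ)² − 4μ)). Suppose ŷ₂ > 0. Then the minimum of h_σ(y) = ½(y − σ)² + μ log(1 + y/θ) over y ≥ 0 is attained at y = 0 or at y = ŷ₂; that is, for all y ≥ 0, min(h_σ(0), h_σ(ŷ₂)) ≤ h_σ(y). -/
/-!
On `y ≥ 0` the derivative of `h(y) = ½(y - σ)² + μ log(1 + y/θ)` is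
`(y - σ) + μ / (θ + y) = (y - a)(y - b) / (θ + y)`, where `a ≤ b` are the two roots of
`(y - σ)(θ + y) + μ`; the larger one is `b = ŷ₂`. Hence `h` increases on `[0, a]` (if this is
nonempty), decreases between `a` and `b`, and increases from `b` on. A point `y ≤ a` therefore
satisfies `h 0 ≤ h y`, and every other point `y ≥ 0` satisfies `h b ≤ h y`.
-/

/-- The factored form of the derivative, with the roots `a`, `b` of its numerator described by
Vieta's relations. -/
lemma hasDerivAt_lsp {θ μ σ a b y : ℝ} (hθ : 0 < θ) (hy : 0 ≤ y)
    (hsum : a + b = σ - θ) (hprod : a * b = μ - σ * θ) :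
    HasDerivAt (fun y : ℝ => (1 / 2) * (y - σ) ^ 2 + μ * Real.log (1 + y / θ))
      ((y - a) * (y - b) / (θ + y)) y := by
  have hpos : 0 < 1 + y / θ := by positivity
  have hlog : HasDerivAt (fun y : ℝ => Real.log (1 + y / θ)) (1 / θ / (1 + y / θ)) y :=
    (((hasDerivAt_id' y).div_const θ).const_add 1).log hpos.ne'
  have hsq : HasDerivAt (fun y : ℝ => (y - σ) ^ 2) (2 * (y - σ)) y := by
    have := ((hasDerivAt_id' y).sub_const σ).fun_pow 2
    norm_num at this
    exact this
  refine ((hsq.const_mul (1 / 2)).add (hlog.const_mul μ)).congr_deriv ?_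
  have h1 : θ + y ≠ 0 := by positivity
  have h2 : 1 / θ / (1 + y / θ) = 1 / (θ + y) := by field_simp
  rw [h2]
  field_simp
  linear_combination y * hsum - hprod

/-- The two-candidate bound for arbitrary ordered roots `a ≤ b` with `b > 0`. -/
lemma lsp_min_le {θ μ σ a b y : ℝ} (hθ : 0 < θ) (hab : a ≤ b) (hb : 0 < b) (hy : 0 ≤ y)
    (hsum : a + b = σ - θ) (hprod : a * b = μ - σ * θ) :
    min ((1 / 2) * (0 - σ) ^ 2 + μ * Real.log (1 + 0 / θ))
        ((1 / 2) * (b - σ) ^ 2 + μ * Real.log (1 + b / θ))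
      ≤ (1 / 2) * (y - σ) ^ 2 + μ * Real.log (1 + y / θ) := by
  set h : ℝ → ℝ := fun y => (1 / 2) * (y - σ) ^ 2 + μ * Real.log (1 + y / θ)
  have hd : ∀ x, 0 ≤ x → HasDerivAt h ((x - a) * (x - b) / (θ + x)) x :=
    fun x hx => hasDerivAt_lsp hθ hx hsum hprod
  have mono : ∀ u v, 0 ≤ u → u ≤ v → (∀ x, u < x → x < v → 0 ≤ (x - a) * (x - b)) →
      h u ≤ h v := by
    intro u v hu huv hs
    refine monotoneOn_of_hasDerivWithinAt_nonneg (convex_Icc u v)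
      (fun x hx => (hd x (hu.trans hx.1)).continuousAt.continuousWithinAt)
      (f' := fun x => (x - a) * (x - b) / (θ + x)) ?_ ?_
      (Set.left_mem_Icc.2 huv) (Set.right_mem_Icc.2 huv) huv <;>
      (intro x hx; rw [interior_Icc] at hx; have hx0 : 0 ≤ x := hu.trans hx.1.le)
    · exact (hd x hx0).hasDerivWithinAt
    · exact div_nonneg (hs x hx.1 hx.2) (by positivity)
  have anti : ∀ u v, 0 ≤ u → u ≤ v → (∀ x, u < x → x < v → (x - a) * (x - b) ≤ 0) →
      h v ≤ h u := by
    intro u v hu huv hs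
    refine antitoneOn_of_hasDerivWithinAt_nonpos (convex_Icc u v)
      (fun x hx => (hd x (hu.trans hx.1)).continuousAt.continuousWithinAt)
      (f' := fun x => (x - a) * (x - b) / (θ + x)) ?_ ?_
      (Set.left_mem_Icc.2 huv) (Set.right_mem_Icc.2 huv) huv <;>
      (intro x hx; rw [interior_Icc] at hx; have hx0 : 0 ≤ x := hu.trans hx.1.le)
    · exact (hd x hx0).hasDerivWithinAt
    · exact div_nonpos_of_nonpos_of_nonneg (hs x hx.1 hx.2) (by positivity)
  change min (h 0) (h b) ≤ h y
  rcases le_total y a with hya | hya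
  · exact (min_le_left _ _).trans (mono 0 y le_rfl hy fun x _ hx =>
      mul_nonneg_of_nonpos_of_nonpos (by linarith) (by linarith))
  refine (min_le_right _ _).trans ?_
  rcases le_total y b with hyb | hyb
  · exact anti y b hy hyb fun x hx hx' =>
      mul_nonpos_of_nonneg_of_nonpos (by linarith) (by linarith)
  · exact mono b y hb.le hyb fun x hx _ => mul_nonneg (by linarith) (by linarith)


/-- LSP proximal solution: if `(σ+θ)² > 4μ` and `ŷ₂ = ½(σ-θ+√((σ+θ)²-4μ)) > 0`, then the
minimum of `h_σ(y) = ½(y-σ)² + μ log(1 + y/θ)` over `y ≥ 0` is attained at `0` or `ŷ₂`. -/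
theorem lsp_prox (θ μ σ : ℝ) (hθ : 0 < θ) (hμ : 0 < μ) (hσ : 0 < σ)
    (hΔ : 4 * μ < (σ + θ) ^ 2)
    (hy2 : 0 < (σ - θ + Real.sqrt ((σ + θ) ^ 2 - 4 * μ)) / 2) :
    ∀ y : ℝ, 0 ≤ y →
      min ((1 / 2) * (0 - σ) ^ 2 + μ * Real.log (1 + 0 / θ))
          ((1 / 2) * ((σ - θ + Real.sqrt ((σ + θ) ^ 2 - 4 * μ)) / 2 - σ) ^ 2
            + μ * Real.log (1 + (σ - θ + Real.sqrt ((σ + θ) ^ 2 - 4 * μ)) / 2 / θ))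
        ≤ (1 / 2) * (y - σ) ^ 2 + μ * Real.log (1 + y / θ) := by
  intro y hy
  have hs := Real.sq_sqrt (sub_nonneg.2 hΔ.le)
  have hs0 := Real.sqrt_nonneg ((σ + θ) ^ 2 - 4 * μ)
  exact lsp_min_le (a := (σ - θ - Real.sqrt ((σ + θ) ^ 2 - 4 * μ)) / 2) hθ (by linarith) hy2 hy
    (by ring) (by linear_combination (-1 / 4) * hs)
end

section
/- (SCAD threshold.) Let θ > 2, μ > 0, and define the SCAD penalty r_SCAD(y) = μy for 0 ≤ y ≤ μ; r_SCAD(y) = (−y² + 2θμy − μ²) / (2(θ − 1)) for μ < y ≤ θμ; and r_SCAD(y) = (θ + 1)μ²/2 for y > θμ. If 0 ≤ σ ≤ μ, then y = 0 is a global minimizer of h_σ(y) = ½(y − σ)² + r_SCAD(y) over y ≥ 0, i.e., h_σ(0) ≤ h_σ(y) for all y ≥ 0. -/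
/-!
Expanding the squares, the claim reads `σ y ≤ y² / 2 + r_SCAD(y)`. For `y ≥ 0` the left side is at
most `μ y`, so it suffices to treat `σ = μ`, which is `mul_le_half_sq_add_rSCAD`: on each of the
three pieces of the penalty this is an elementary quadratic inequality.
-/

/-- The SCAD penalty with parameters `μ` and `θ`. -/
noncomputable def rSCAD (θ μ y : ℝ) : ℝ :=
  if y ≤ μ then μ * y
  else if y ≤ θ * μ then (-y ^ 2 + 2 * θ * μ * y - μ ^ 2) / (2 * (θ - 1))
  else (θ + 1) * μ ^ 2 / 2

/-- The penalised square dominates the linear function `μ y`; this is the case `σ = μ`, which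
implies the others because `σ y ≤ μ y`. -/
lemma mul_le_half_sq_add_rSCAD {θ μ y : ℝ} (hθ : 2 < θ) (hμ : 0 < μ) :
    μ * y ≤ y ^ 2 / 2 + rSCAD θ μ y := by
  unfold rSCAD
  split_ifs with h₁ h₂
  · nlinarith [sq_nonneg y]
  · have hd : 0 < 2 * (θ - 1) := by linarith
    rw [← sub_le_iff_le_add', le_div_iff₀ hd]
    -- The difference of the two sides is `(θ - 2) y² + μ (2 y - μ)`, and `y > μ`.
    nlinarith [mul_nonneg (sub_nonneg.2 hθ.le) (sq_nonneg y),
      mul_pos hμ (sub_pos.2 (not_le.1 h₁)), sq_pos_of_pos hμ]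
  · -- Twice the difference of the two sides is `(y - μ)² + θ μ²`.
    nlinarith [sq_nonneg (y - μ), mul_nonneg (by linarith : (0 : ℝ) ≤ θ) (sq_nonneg μ)]

/-- SCAD threshold: if `0 ≤ σ ≤ μ` then `y = 0` globally minimizes
`h_σ(y) = ½(y-σ)² + r_SCAD(y)` over `y ≥ 0`. -/
theorem scad_threshold (θ μ σ : ℝ) (hθ : 2 < θ) (hμ : 0 < μ)
    (hσ0 : 0 ≤ σ) (hσ : σ ≤ μ) :
    ∀ y : ℝ, 0 ≤ y →
      (1 / 2) * (0 - σ) ^ 2 + rSCAD θ μ 0 ≤ (1 / 2) * (y - σ) ^ 2 + rSCAD θ μ y := by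
  intro y hy
  have h₀ : rSCAD θ μ 0 = 0 := by simp [rSCAD, hμ.le]
  rw [h₀]
  nlinarith [mul_le_half_sq_add_rSCAD (y := y) hθ hμ, mul_le_mul_of_nonneg_right hσ hy]
end

section
/- (MCP proximal solution, 0 < θ < 1.) Let 0 < θ < 1, μ > 0, and define the MCP penalty r_MCP(y) = μy − y²/(2θ) for 0 ≤ y ≤ θμ and r_MCP(y) = θμ²/2 for y > θμ. Then: (i) if 0 ≤ σ ≤ √θ·μ, the point y = 0 is a global minimizer of h_σ(y) = ½(y − σ)² + r_MCP(y) over y ≥ 0; and (ii) if σ ≥ √θ·μ, the point y = σ is a global minimizer of h_σ over y ≥ 0. -/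
/-! Expanding the square, `y = 0` beats `y` exactly when `y * σ ≤ y² / 2 + rMCP y`. At the threshold
`σ = √θ μ` this is `mul_sqrt_mul_le` below, and it then holds for all smaller `σ`. For `σ ≥ √θ μ`
the point `σ` lies in the flat region (as `θ < √θ`), so its value is the maximum `θ μ² / 2` of the
penalty. A competitor `y` in the flat region is only worse, and for `y ≤ θ μ ≤ √θ μ ≤ σ` the
quadratic term decreases when `σ` is replaced by `√θ μ`, where both candidates `0` and `σ` have the
same value, so the threshold inequality applies again. -/

/-- The MCP (minimax concave) penalty with parameters `μ` and `θ`. -/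
noncomputable def rMCP (θ μ y : ℝ) : ℝ :=
  if y ≤ θ * μ then μ * y - y ^ 2 / (2 * θ) else θ * μ ^ 2 / 2

/-- At the threshold `σ = √θ μ`, written `s * μ` with `θ = s²`, the point `0` is a minimizer. On the
flat region the difference of the two sides is `(y - s μ)² / 2`; on the curved region it is
`y (1 - s) (2 s² μ - y (1 + s)) / (2 s²)`. -/
lemma mul_sqrt_mul_le {s μ y : ℝ} (hs0 : 0 < s) (hs1 : s < 1) (hy : 0 ≤ y) :
    y * (s * μ) ≤ y ^ 2 / 2 + rMCP (s ^ 2) μ y := by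
  unfold rMCP
  split_ifs with h
  · have h1 : 0 ≤ 2 * s ^ 2 * μ - y * (1 + s) := by
      nlinarith [mul_nonneg hy (sub_nonneg.2 hs1.le)]
    have h2 : y ^ 2 / 2 + (μ * y - y ^ 2 / (2 * s ^ 2)) - y * (s * μ) =
        y * (1 - s) * (2 * s ^ 2 * μ - y * (1 + s)) / (2 * s ^ 2) := by
      field_simp
      ring
    have h3 : 0 ≤ y * (1 - s) * (2 * s ^ 2 * μ - y * (1 + s)) / (2 * s ^ 2) :=
      div_nonneg (mul_nonneg (mul_nonneg hy (sub_nonneg.2 hs1.le)) h1) (by positivity)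
    linarith
  · nlinarith [sq_nonneg (y - s * μ)]

/-- MCP proximal solution for `0 < θ < 1`: if `0 ≤ σ ≤ √θ·μ` then `y = 0` globally minimizes
`h_σ(y) = ½(y-σ)² + r_MCP(y)` over `y ≥ 0`; if `σ ≥ √θ·μ` then `y = σ` is a global
minimizer. -/
theorem mcp_prox_small_theta (θ μ σ : ℝ) (hθ0 : 0 < θ) (hθ1 : θ < 1) (hμ : 0 < μ)
    (hσ0 : 0 ≤ σ) :
    (σ ≤ Real.sqrt θ * μ →
      ∀ y : ℝ, 0 ≤ y →
        (1 / 2) * (0 - σ) ^ 2 + rMCP θ μ 0 ≤ (1 / 2) * (y - σ) ^ 2 + rMCP θ μ y) ∧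
    (Real.sqrt θ * μ ≤ σ →
      ∀ y : ℝ, 0 ≤ y →
        (1 / 2) * (σ - σ) ^ 2 + rMCP θ μ σ ≤ (1 / 2) * (y - σ) ^ 2 + rMCP θ μ y) := by
  obtain ⟨s, hs0, rfl⟩ : ∃ s : ℝ, 0 < s ∧ θ = s ^ 2 :=
    ⟨√θ, Real.sqrt_pos.2 hθ0, (Real.sq_sqrt hθ0.le).symm⟩
  have hs1 : s < 1 := by nlinarith
  rw [Real.sqrt_sq hs0.le]
  have hlt : s ^ 2 * μ < s * μ := by
    nlinarith [mul_pos (mul_pos hs0 hμ) (sub_pos.2 hs1)]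
  refine ⟨fun hσ y hy => ?_, fun hσ y hy => ?_⟩
  · have key := mul_sqrt_mul_le (μ := μ) hs0 hs1 hy
    have h0 : rMCP (s ^ 2) μ 0 = 0 := by
      simp [rMCP, (by positivity : 0 ≤ s ^ 2 * μ)]
    rw [h0]
    nlinarith [mul_le_mul_of_nonneg_left hσ hy]
  · have hr : rMCP (s ^ 2) μ σ = s ^ 2 * μ ^ 2 / 2 := if_neg (by linarith)
    rw [hr]
    by_cases h : y ≤ s ^ 2 * μ
    · have key := mul_sqrt_mul_le (μ := μ) hs0 hs1 hy
      have hmono : (s * μ - y) ^ 2 ≤ (σ - y) ^ 2 :=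
        pow_le_pow_left₀ (by linarith) (by linarith) 2
      nlinarith
    · have hy' : rMCP (s ^ 2) μ y = s ^ 2 * μ ^ 2 / 2 := if_neg h
      rw [hy']
      nlinarith [sq_nonneg (y - σ)]
end
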